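/- For each u ∈ ℂ with |u| ≤ u_c, the power series Z_u(v) := Σ_{q≥0} (Σ_{p≥0} z_{p,q}·u^p)·v^q in v has radius of convergence exactly u_c, admits no analytic continuation to any neighborhood of the point u_c (i.e. u_c is its dominant singularity), and admits an analytic continuation to a slit disk at u_c (whose margin may depend on u). -/

import Mathlib

noncomputable def nuc : ℝ := 1 + 2 * Real.sqrt 7

noncomputable def tc : ℝ := Real.sqrt 10 / (8 * (7 + Real.sqrt 7) ^ ((3:ℝ)/2))

noncomputable def uc : ℝ := (6/5) * (7 + Real.sqrt 7) * tc

/-- The rational parametrization `û` of the `u`-variable. -/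
noncomputable def uhat (H : ℂ) : ℂ :=
  ((uc : ℂ) / 3) * H * (10 - 12 * H + 6 * H ^ 2 - H ^ 3)

/-- The rational parametrization `Ẑ₀`. -/
noncomputable def Z0hat (H : ℂ) : ℂ :=
  (1/10) * (1 - (1 - (Real.sqrt 7 : ℂ)) * H + 3 * H ^ 2 - H ^ 3)
    * (10 - 12 * H + 6 * H ^ 2 - H ^ 3)

/-- The rational parametrization `Ẑ₁`. -/
noncomputable def Z1hat (H : ℂ) : ℂ :=
  (3 / (10 * (uc : ℂ))) *
    ((Real.sqrt 7 : ℂ) - 1 + H - 3 * (4 - 3 * H + H ^ 2) / (10 - 12 * H + 6 * H ^ 2 - H ^ 3))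

/-- The rational parametrization `Â`. -/
noncomputable def Ahat (H : ℂ) : ℂ :=
  (1/10) * ((((3:ℝ)/2) ^ ((7:ℝ)/3) : ℝ) : ℂ) * (9 - 8 * H + 3 * H ^ 2) / (3 - 3 * H + H ^ 2) ^ 2

/-- The slit disk at `x > 0` of margin `ε > 0`. -/
def slitDisk (x ε : ℝ) : Set ℂ :=
  Metric.ball (0 : ℂ) (x + ε) \ (Complex.ofReal '' Set.Icc x (x + ε))

/-! ### The inverse branch of `w ↦ w³(2+w)/3` on a slit disk -/

/-- Fixed points `w` of this map with `0 ≤ re w` are solutions of `w³(2+w) = 3ζ`. -/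
noncomputable def cubicStep (ζ w : ℂ) : ℂ :=
  Complex.exp ((Complex.log (3 * ζ) - Complex.log (2 + w)) / 3)

theorem two_add_mem_slitPlane {w : ℂ} (hw : 0 ≤ w.re) : 2 + w ∈ Complex.slitPlane := by
  left
  simp
  linarith

theorem three_mul_mem_slitPlane {ζ : ℂ} (hζ : ζ ∈ Complex.slitPlane) :
    3 * ζ ∈ Complex.slitPlane := by
  rcases hζ with h | h
  · left
    simpa using h
  · right
    simpa using h

theorem cubicStep_cube {ζ w : ℂ} (hζ : ζ ≠ 0) (hw : 0 ≤ w.re) :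
    cubicStep ζ w ^ 3 * (2 + w) = 3 * ζ := by
  have h2 : 2 + w ≠ 0 := Complex.slitPlane_ne_zero (two_add_mem_slitPlane hw)
  rw [cubicStep, ← Complex.exp_nat_mul]
  have : ((3 : ℕ) : ℂ) * ((Complex.log (3 * ζ) - Complex.log (2 + w)) / 3)
      = Complex.log (3 * ζ) - Complex.log (2 + w) := by
    push_cast
    ring
  rw [this, Complex.exp_sub, Complex.exp_log (by simpa using hζ), Complex.exp_log h2,
    div_mul_cancel₀ _ h2]

theorem abs_arg_two_add_le {w : ℂ} (hw : 0 ≤ w.re) : |(2 + w).arg| ≤ Real.pi / 2 := by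
  rw [Complex.abs_arg_le_pi_div_two_iff]
  simp
  linarith

theorem cubicStep_exponent_im (ζ w : ℂ) :
    ((Complex.log (3 * ζ) - Complex.log (2 + w)) / 3).im
      = ((3 * ζ).arg - (2 + w).arg) / 3 := by
  rw [show (3 : ℂ) = ((3 : ℝ) : ℂ) by norm_num, Complex.div_ofReal_im, Complex.sub_im,
    Complex.log_im, Complex.log_im]

theorem cubicStep_re_pos {ζ w : ℂ} (hζ : ζ ∈ Complex.slitPlane) (hw : 0 ≤ w.re) :
    0 < (cubicStep ζ w).re := by
  rw [cubicStep, Complex.exp_re, cubicStep_exponent_im]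
  refine mul_pos (Real.exp_pos _) (Real.cos_pos_of_mem_Ioo ?_)
  have h1 := abs_le.1 (abs_arg_two_add_le hw)
  have h2 := Complex.neg_pi_lt_arg (3 * ζ)
  have h3 := (Complex.arg_le_pi (3 * ζ)).lt_of_ne
    (Complex.mem_slitPlane_iff_arg.1 (three_mul_mem_slitPlane hζ)).1
  constructor <;> linarith [h1.1, h1.2]

theorem cubicStep_im_sq_le {ζ w : ℂ} (hζ : 0 ≤ ζ.re) (hw : 0 ≤ w.re) :
    (cubicStep ζ w).im ^ 2 ≤ 3 * (cubicStep ζ w).re ^ 2 := by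
  rw [cubicStep, Complex.exp_re, Complex.exp_im, cubicStep_exponent_im]
  set θ := ((3 * ζ).arg - (2 + w).arg) / 3 with hθ
  have h1 := abs_le.1 (abs_arg_two_add_le hw)
  have h2 : |(3 * ζ).arg| ≤ Real.pi / 2 := by
    rw [Complex.abs_arg_le_pi_div_two_iff]
    simpa using hζ
  have h3 := abs_le.1 h2
  have hcos : 1 / 2 ≤ Real.cos θ := by
    rw [← Real.cos_pi_div_three, ← Real.cos_abs θ]
    refine Real.cos_le_cos_of_nonneg_of_le_pi (abs_nonneg _) (by linarith [Real.pi_pos]) ?_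
    rw [abs_le]
    constructor <;> linarith [h1.1, h1.2, h3.1, h3.2]
  have hs := Real.sin_sq_add_cos_sq θ
  have : Real.sin θ ^ 2 ≤ 3 * Real.cos θ ^ 2 := by nlinarith
  rw [mul_pow, mul_pow]
  nlinarith [sq_nonneg (Real.exp ((Complex.log (3 * ζ) - Complex.log (2 + w)) / 3).re)]

theorem two_le_norm_two_add {w : ℂ} (hw : 0 ≤ w.re) : 2 ≤ ‖2 + w‖ := by
  refine le_trans ?_ (Complex.re_le_norm _)
  simpa using hw

theorem norm_cubicStep_le {ζ w : ℂ} (hζ : ζ ≠ 0) (hζ3 : ‖ζ‖ < 3) (hw : 0 ≤ w.re) :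
    ‖cubicStep ζ w‖ ≤ 2 := by
  have h := congrArg norm (cubicStep_cube hζ hw)
  rw [norm_mul, norm_pow, norm_mul] at h
  have h2 := two_le_norm_two_add hw
  by_contra! hc
  have : (2 : ℝ) ^ 3 < ‖cubicStep ζ w‖ ^ 3 := by gcongr
  norm_num at h this
  nlinarith

theorem hasDerivAt_cubicStep (ζ : ℂ) {w : ℂ} (hw : 0 ≤ w.re) :
    HasDerivAt (cubicStep ζ) (cubicStep ζ w * (-(1 / (2 + w)) / 3)) w := by
  have h : HasDerivAt (fun w : ℂ => 2 + w) 1 w := by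
    simpa using (hasDerivAt_id w).const_add 2
  exact (((h.clog (two_add_mem_slitPlane hw)).const_sub _).div_const 3).cexp

theorem norm_cubicStep_sub_le {ζ w x : ℂ} (hζ : ζ ≠ 0) (hζ3 : ‖ζ‖ < 3) (hw : 0 ≤ w.re)
    (hx : 0 ≤ x.re) : ‖cubicStep ζ w - cubicStep ζ x‖ ≤ 1 / 2 * ‖w - x‖ := by
  refine (convex_halfSpace_re_ge 0).norm_image_sub_le_of_norm_hasDerivWithin_le
    (f := cubicStep ζ) (s := {c : ℂ | 0 ≤ c.re})
    (fun y hy => (hasDerivAt_cubicStep ζ hy).hasDerivWithinAt) ?_ hx hw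
  intro y hy
  have h1 := norm_cubicStep_le hζ hζ3 hy
  have h2 := two_le_norm_two_add (w := y) hy
  rw [norm_mul, norm_div, norm_neg, norm_div, norm_one, Complex.norm_ofNat]
  have h3 : 1 / ‖2 + y‖ ≤ 1 / 2 := one_div_le_one_div_of_le (by norm_num) h2
  have h4 : 0 ≤ 1 / ‖2 + y‖ := by positivity
  nlinarith [norm_nonneg (cubicStep ζ y)]

/-- The punctured slit disk on which the inverse branch is analytic. -/
def branchDomain : Set ℂ := Complex.slitPlane ∩ Metric.ball 0 3

theorem isOpen_branchDomain : IsOpen branchDomain :=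
  Complex.isOpen_slitPlane.inter Metric.isOpen_ball

theorem ne_zero_of_mem_branchDomain {ζ : ℂ} (hζ : ζ ∈ branchDomain) : ζ ≠ 0 :=
  Complex.slitPlane_ne_zero hζ.1

theorem norm_lt_of_mem_branchDomain {ζ : ℂ} (hζ : ζ ∈ branchDomain) : ‖ζ‖ < 3 := by
  simpa using hζ.2

theorem exists_cubicStep_fixed {ζ : ℂ} (hζ : ζ ∈ branchDomain) :
    ∃ w : ℂ, 0 ≤ w.re ∧ cubicStep ζ w = w := by
  have hmaps : Set.MapsTo (cubicStep ζ) {w | 0 ≤ w.re} {w | 0 ≤ w.re} :=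
    fun w hw => (cubicStep_re_pos hζ.1 hw).le
  have hclosed : IsClosed {w : ℂ | 0 ≤ w.re} :=
    isClosed_le continuous_const Complex.continuous_re
  have hcontr : ContractingWith (1 / 2) (hmaps.restrict (cubicStep ζ) _ _) := by
    refine ⟨by norm_num, LipschitzWith.of_dist_le_mul fun x y => ?_⟩
    rw [Subtype.dist_eq, Subtype.dist_eq, dist_eq_norm, dist_eq_norm]
    simpa using norm_cubicStep_sub_le (ne_zero_of_mem_branchDomain hζ)
      (norm_lt_of_mem_branchDomain hζ) x.2 y.2
  obtain ⟨w, hw, hfix, -⟩ := hcontr.exists_fixedPoint' hclosed.isComplete hmaps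
    (x := 0) (by simp) (edist_ne_top _ _)
  exact ⟨w, hw, hfix⟩

open Classical in
/-- The inverse branch of `w ↦ w³(2+w)/3` sending `1` to `1`, extended by `0`. -/
noncomputable def branch (ζ : ℂ) : ℂ :=
  if h : ζ ∈ branchDomain then (exists_cubicStep_fixed h).choose else 0

theorem branch_spec {ζ : ℂ} (hζ : ζ ∈ branchDomain) :
    0 ≤ (branch ζ).re ∧ cubicStep ζ (branch ζ) = branch ζ := by
  rw [branch, dif_pos hζ]
  exact (exists_cubicStep_fixed hζ).choose_spec

theorem branch_zero : branch 0 = 0 :=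
  dif_neg fun h => ne_zero_of_mem_branchDomain h rfl

theorem branch_re_nonneg (ζ : ℂ) : 0 ≤ (branch ζ).re := by
  by_cases h : ζ ∈ branchDomain
  · exact (branch_spec h).1
  · simp [branch, h]

theorem branch_equation {ζ : ℂ} (hζ : ζ ∈ insert 0 branchDomain) :
    branch ζ ^ 3 * (2 + branch ζ) = 3 * ζ := by
  rcases hζ with rfl | hζ
  · simp [branch_zero]
  · have h := cubicStep_cube (ne_zero_of_mem_branchDomain hζ) (branch_re_nonneg ζ)
    rwa [(branch_spec hζ).2] at h

theorem branch_ne_zero {ζ : ℂ} (hζ : ζ ∈ branchDomain) : branch ζ ≠ 0 := by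
  intro h
  have := branch_equation (Set.mem_insert_of_mem 0 hζ)
  rw [h] at this
  exact ne_zero_of_mem_branchDomain hζ (by simpa using this.symm)

theorem continuousAt_branch {ζ : ℂ} (hζ : ζ ∈ branchDomain) : ContinuousAt branch ζ := by
  have hstep : ContinuousAt (fun ξ => cubicStep ξ (branch ζ)) ζ := by
    have : ContinuousAt (fun ξ : ℂ => Complex.log (3 * ξ)) ζ :=
      (continuousAt_const.mul continuousAt_id).clog (three_mul_mem_slitPlane hζ.1)
    exact ((this.sub continuousAt_const).div_const 3).cexp
  have hlim : Filter.Tendsto (fun ξ => 2 * ‖cubicStep ξ (branch ζ) - branch ζ‖)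
      (nhds ζ) (nhds 0) := by
    have := ((hstep.sub (continuousAt_const (y := branch ζ))).norm).const_mul 2
    simpa [ContinuousAt, (branch_spec hζ).2] using this
  rw [ContinuousAt, tendsto_iff_norm_sub_tendsto_zero]
  refine squeeze_zero' (Filter.Eventually.of_forall fun _ => norm_nonneg _) ?_ hlim
  filter_upwards [isOpen_branchDomain.mem_nhds hζ] with ξ hξ
  have h1 := norm_cubicStep_sub_le (ne_zero_of_mem_branchDomain hξ)
    (norm_lt_of_mem_branchDomain hξ) (branch_re_nonneg ξ) (branch_re_nonneg ζ)
  rw [(branch_spec hξ).2] at h1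
  have h2 := norm_sub_le_norm_sub_add_norm_sub (branch ξ) (cubicStep ξ (branch ζ)) (branch ζ)
  linarith

theorem differentiableAt_branch {ζ : ℂ} (hζ : ζ ∈ branchDomain) :
    DifferentiableAt ℂ branch ζ := by
  have hw := branch_ne_zero hζ
  have h3 : (6 * branch ζ ^ 2 + 4 * branch ζ ^ 3) / 3 ≠ 0 := by
    have : 3 + 2 * branch ζ ≠ 0 := by
      intro h
      have := congrArg Complex.re h
      simp at this
      linarith [branch_re_nonneg ζ]
    rw [show (6 * branch ζ ^ 2 + 4 * branch ζ ^ 3) / 3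
      = 2 * branch ζ ^ 2 * (3 + 2 * branch ζ) / 3 by ring]
    simp [hw, this]
  have hf : HasDerivAt (fun w : ℂ => w ^ 3 * (2 + w) / 3)
      ((6 * branch ζ ^ 2 + 4 * branch ζ ^ 3) / 3) (branch ζ) := by
    have := (((hasDerivAt_id (branch ζ)).pow 3).mul
      ((hasDerivAt_id (branch ζ)).const_add 2)).div_const 3
    refine this.congr_deriv ?_
    simp
    ring
  refine (HasDerivAt.of_local_left_inverse (continuousAt_branch hζ) hf h3 ?_).differentiableAt
  filter_upwards [isOpen_branchDomain.mem_nhds hζ] with ξ hξ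
  rw [branch_equation (Set.mem_insert_of_mem 0 hξ)]
  ring

theorem continuousWithinAt_branch {ζ : ℂ} (hζ : ζ ∈ insert 0 branchDomain) :
    ContinuousWithinAt branch (insert 0 branchDomain) ζ := by
  rcases hζ with rfl | hζ
  · have hbound : ∀ ξ ∈ insert 0 branchDomain, ‖branch ξ‖ ^ 3 ≤ 3 / 2 * ‖ξ‖ := by
      intro ξ hξ
      have h := congrArg norm (branch_equation hξ)
      rw [norm_mul, norm_pow, norm_mul, Complex.norm_ofNat] at h
      nlinarith [two_le_norm_two_add (branch_re_nonneg ξ), pow_nonneg (norm_nonneg (branch ξ)) 3]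
    rw [ContinuousWithinAt, branch_zero, Metric.tendsto_nhdsWithin_nhds]
    intro ε hε
    refine ⟨2 / 3 * ε ^ 3, by positivity, fun ξ hξ hd => ?_⟩
    rw [dist_zero_right] at hd ⊢
    refine lt_of_pow_lt_pow_left₀ 3 hε.le ((hbound ξ hξ).trans_lt ?_)
    linarith
  · exact (continuousAt_branch hζ).continuousWithinAt

theorem branch_im_sq_le {ζ : ℂ} (hζ : ζ ∈ insert 0 branchDomain) (hre : 0 ≤ ζ.re) :
    3 * (branch ζ).im ^ 2 ≤ (branch ζ).re ^ 2 := by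
  have heq := congrArg Complex.re (branch_equation hζ)
  rcases hζ with rfl | hζ
  · simp [branch_zero]
  have h3 : (branch ζ).im ^ 2 ≤ 3 * (branch ζ).re ^ 2 := by
    have := cubicStep_im_sq_le hre (branch_re_nonneg ζ)
    rwa [(branch_spec hζ).2] at this
  have ha := branch_re_nonneg ζ
  generalize branch ζ = w at *
  simp [pow_succ] at heq
  by_contra! hc
  have hb : 0 < w.im ^ 2 := by nlinarith [sq_nonneg w.re]
  have hapos : 0 < w.re ^ 2 := by linarith
  nlinarith [mul_nonneg ha (sub_nonneg.2 hc.le),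
    mul_nonneg (sub_nonneg.2 hc.le) (sub_nonneg.2 h3), mul_pos hapos hb]

theorem branch_one : branch 1 = 1 := by
  have hmem : (1 : ℂ) ∈ insert 0 branchDomain :=
    Or.inr ⟨Complex.one_mem_slitPlane, by simp⟩
  have h := branch_equation hmem
  have h3 := branch_im_sq_le hmem (by simp)
  have ha := branch_re_nonneg 1
  generalize branch 1 = w at *
  have hfac : (w - 1) * (w ^ 3 + 3 * w ^ 2 + 3 * w + 3) = 0 := by linear_combination h
  rcases mul_eq_zero.1 hfac with h0 | h0
  · exact sub_eq_zero.1 h0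
  · have := congrArg Complex.re h0
    simp [pow_succ] at this
    nlinarith [mul_nonneg ha (sub_nonneg.2 h3)]

/-! ### The rational parametrization in the coordinates `w = 1 - H`, `x = 1 - K` -/

/-- The denominator of the parametrization of `Z`, up to the factor `10`. -/
def paramDen (w x : ℂ) : ℂ :=
  w + x + w ^ 2 + w * x + x ^ 2 + w ^ 3 + w ^ 2 * x + w * x ^ 2 + x ^ 3 + w ^ 2 * x ^ 2

/-- The coefficients in `x` of the numerator of the parametrization of `Z`. -/
noncomputable def paramNumCoeff (w : ℂ) : ℕ → ℂ
  | 0 => w * ((3 + 6 * (Real.sqrt 7 : ℂ)) * (1 + w + w ^ 2) - (4 + 2 * (Real.sqrt 7 : ℂ)) * w ^ 3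
      - 3 * (Real.sqrt 7 : ℂ) * w ^ 4 + (3 - 3 * (Real.sqrt 7 : ℂ)) * w ^ 5
      + (5 - (Real.sqrt 7 : ℂ)) * w ^ 6 + 4 * w ^ 7 + w ^ 8)
  | 1 => (3 + 6 * (Real.sqrt 7 : ℂ)) * (1 + w + w ^ 2) - (4 + 2 * (Real.sqrt 7 : ℂ)) * w ^ 3
      - 3 * (Real.sqrt 7 : ℂ) * w ^ 4 + (3 - 3 * (Real.sqrt 7 : ℂ)) * w ^ 5
      + (5 - (Real.sqrt 7 : ℂ)) * w ^ 6 + 4 * w ^ 7 + w ^ 8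
  | 2 => (3 + 6 * (Real.sqrt 7 : ℂ)) * (1 + w + w ^ 2) - (4 + 2 * (Real.sqrt 7 : ℂ)) * w ^ 3
      - 3 * (Real.sqrt 7 : ℂ) * w ^ 4 + (3 - 3 * (Real.sqrt 7 : ℂ)) * w ^ 5
      + (5 - (Real.sqrt 7 : ℂ)) * w ^ 6 + 4 * w ^ 7 + w ^ 8
  | 3 => 3 + 6 * (Real.sqrt 7 : ℂ) - (4 + 2 * (Real.sqrt 7 : ℂ)) * (w + w ^ 2)
      + (1 - 4 * (Real.sqrt 7 : ℂ)) * w ^ 3 + (3 - (Real.sqrt 7 : ℂ)) * w ^ 4 + 3 * w ^ 5 + w ^ 6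
  | 4 => -(4 + 2 * (Real.sqrt 7 : ℂ)) - 3 * (Real.sqrt 7 : ℂ) * (w + w ^ 2)
      + (3 - (Real.sqrt 7 : ℂ)) * w ^ 3 + w ^ 4
  | 5 => -3 * (Real.sqrt 7 : ℂ) + (3 - 3 * (Real.sqrt 7 : ℂ)) * (w + w ^ 2) + 3 * w ^ 3
  | 6 => 3 - 3 * (Real.sqrt 7 : ℂ) + (5 - (Real.sqrt 7 : ℂ)) * (w + w ^ 2) + w ^ 3
  | 7 => 5 - (Real.sqrt 7 : ℂ) + 4 * (w + w ^ 2)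
  | 8 => 4 + w + w ^ 2
  | 9 => 1
  | _ => 0

/-- The numerator of the parametrization of `Z`. -/
noncomputable def paramNum (w x : ℂ) : ℂ :=
  ∑ j ∈ Finset.range 10, paramNumCoeff w j * x ^ j

/-- The factor of the kernel that cancels from the equation for `Z`. -/
def kernelFactor (w x : ℂ) : ℂ :=
  (1 - w) * (1 - x) ^ 2 - (3 * (1 - w) - 1) * (1 - x) + (1 - w) ^ 2

theorem sqrt_seven_sq : (Real.sqrt 7) ^ 2 = 7 := Real.sq_sqrt (by norm_num)

theorem tc_pos : 0 < tc := by
  rw [tc]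
  positivity

theorem uc_pos : 0 < uc := by
  rw [uc]
  have := tc_pos
  positivity

theorem tc_sq : tc ^ 2 * (64 * (7 + Real.sqrt 7) ^ 3) = 10 := by
  have h7 : 0 < 7 + Real.sqrt 7 := by positivity
  have hpow : ((7 + Real.sqrt 7) ^ ((3 : ℝ) / 2)) ^ 2 = (7 + Real.sqrt 7) ^ 3 := by
    rw [← Real.rpow_natCast, ← Real.rpow_mul h7.le, ← Real.rpow_natCast]
    norm_num
  rw [tc, div_pow, mul_pow, hpow, Real.sq_sqrt (by norm_num)]
  field_simp
  norm_num

theorem nuc_sq_sub_one_mul_tc : (nuc ^ 2 - 1) * tc = 10 / 3 * uc := by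
  rw [nuc, uc]
  linear_combination 4 * tc * sqrt_seven_sq

theorem nuc_sq_sub_one_mul_uc_sq : (nuc ^ 2 - 1) * uc ^ 2 = 9 / 10 := by
  rw [nuc, uc]
  linear_combination (9 / 100) * tc_sq + 4 * (6 / 5 * (7 + Real.sqrt 7) * tc) ^ 2 * sqrt_seven_sq

theorem uhat_one_sub (w : ℂ) : uhat (1 - w) = uc * (1 - w ^ 3 * (2 + w) / 3) := by
  rw [uhat]
  ring

theorem kernel_equation_factored {w x Z : ℂ} (hx : 3 + 3 * x + 3 * x ^ 2 + x ^ 3 ≠ 0)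
    (h : ((nuc : ℂ) * uhat (1 - x) * uhat (1 - w) - uhat (1 - w) ^ 2
          - ((nuc : ℂ) ^ 2 - 1) * (tc : ℂ) * uhat (1 - x)
            * (Z0hat (1 - w) + uhat (1 - w) * Z1hat (1 - x)))
          * (Z - Z0hat (1 - x))
        = uhat (1 - w) ^ 2 * (Z0hat (1 - x) - Z0hat (1 - w))
          + ((nuc : ℂ) ^ 2 - 1) * uhat (1 - w) * uhat (1 - x)
            * (uhat (1 - w) ^ 2 - (tc : ℂ) * Z0hat (1 - w) * Z1hat (1 - x))) :
    (3 + 3 * w + 3 * w ^ 2 + w ^ 3) * kernelFactor w x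
      * (10 * paramDen w x * Z - paramNum w x) = 0 := by
  have hU : (uc : ℂ) ≠ 0 := by exact_mod_cast uc_pos.ne'
  have hA1 : ((nuc : ℂ) ^ 2 - 1) * tc = 10 / 3 * uc := by
    simpa using congrArg (fun r : ℝ => (r : ℂ)) nuc_sq_sub_one_mul_tc
  have hA2 : ((nuc : ℂ) ^ 2 - 1) * uc ^ 2 = 9 / 10 := by
    simpa using congrArg (fun r : ℝ => (r : ℂ)) nuc_sq_sub_one_mul_uc_sq
  have hs : (Real.sqrt 7 : ℂ) ^ 2 = 7 := by exact_mod_cast sqrt_seven_sq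
  have hnu : (nuc : ℂ) = 1 + 2 * (Real.sqrt 7 : ℂ) := by
    rw [nuc]
    push_cast
    ring
  set m : ℂ := 3 * (4 - 3 * (1 - x) + (1 - x) ^ 2) / (3 + 3 * x + 3 * x ^ 2 + x ^ 3) with hm_def
  have hm : (3 + 3 * x + 3 * x ^ 2 + x ^ 3) * m = 3 * (4 - 3 * (1 - x) + (1 - x) ^ 2) := by
    rw [hm_def, mul_div_cancel₀ _ hx]
  have hZ1 : (uc : ℂ) * Z1hat (1 - x) = 3 / 10 * ((Real.sqrt 7 : ℂ) - 1 + (1 - x) - m) := by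
    rw [Z1hat, hm_def, show 10 - 12 * (1 - x) + 6 * (1 - x) ^ 2 - (1 - x) ^ 3
      = 3 + 3 * x + 3 * x ^ 2 + x ^ 3 by ring]
    field_simp
  rw [uhat_one_sub, uhat_one_sub] at h
  generalize Z1hat (1 - x) = Z1 at h hZ1
  set a : ℂ := 1 - w ^ 3 * (2 + w) / 3 with ha
  set b : ℂ := 1 - x ^ 3 * (2 + x) / 3 with hb
  set A : ℂ := (nuc : ℂ) ^ 2 - 1 with hA
  clear_value A m
  set U : ℂ := (uc : ℂ)
  have h' : U ^ 2 * ((nuc * b * a - a ^ 2 - 10 / 3 * b * Z0hat (1 - w)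
        - a * b * ((Real.sqrt 7 : ℂ) - 1 + (1 - x) - m)) * (Z - Z0hat (1 - x))
      - a ^ 2 * (Z0hat (1 - x) - Z0hat (1 - w)) - 9 / 10 * a ^ 3 * b
      + a * b * Z0hat (1 - w) * ((Real.sqrt 7 : ℂ) - 1 + (1 - x) - m)) = 0 := by
    linear_combination h
      - (-(U * b) * (Z0hat (1 - w) + U * a * Z1) * (Z - Z0hat (1 - x))
          + U * a * (U * b) * Z0hat (1 - w) * Z1) * hA1
      + (a * b * (U * a) ^ 2) * hA2
      - (10 / 3 * (U * a) * (U * b) * (Z0hat (1 - w) - (Z - Z0hat (1 - x)))) * hZ1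
  have h'' := (mul_eq_zero.1 h').resolve_left (pow_ne_zero 2 hU)
  have hcleared : (nuc * b * a - a ^ 2 - 10 / 3 * b * Z0hat (1 - w)) * (Z - Z0hat (1 - x))
      - a ^ 2 * (Z0hat (1 - x) - Z0hat (1 - w)) - 9 / 10 * a ^ 3 * b
      + a * ((1 - x) / 3) * (Z0hat (1 - w) + Z0hat (1 - x) - Z)
        * ((3 + 3 * x + 3 * x ^ 2 + x ^ 3) * ((Real.sqrt 7 : ℂ) - x)
          - 3 * (4 - 3 * (1 - x) + (1 - x) ^ 2)) = 0 := by
    rw [← hm]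
    linear_combination h'' - a * (Z0hat (1 - w) + Z0hat (1 - x) - Z)
      * ((Real.sqrt 7 : ℂ) - x - m) * hb
  rw [hnu, ha, hb] at hcleared
  simp only [Z0hat] at hcleared
  simp only [paramNum, paramNumCoeff, paramDen, kernelFactor, Finset.sum_range_succ,
    Finset.sum_range_zero]
  linear_combination (-90) * hcleared + 9 * (1 - w ^ 3 * (2 + w) / 3) * (1 - x ^ 3 * (2 + x) / 3)
    * (1 - w) * (3 + 3 * w + 3 * w ^ 2 + w ^ 3) * hs

theorem differentiable_paramDen : Differentiable ℂ fun y : ℂ × ℂ => paramDen y.1 y.2 := by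
  unfold paramDen
  fun_prop

theorem differentiable_paramNum : Differentiable ℂ fun y : ℂ × ℂ => paramNum y.1 y.2 := by
  simp only [paramNum, paramNumCoeff, Finset.sum_range_succ, Finset.sum_range_zero]
  fun_prop

/-- A bounded piece of the closed sector of half-angle `π/6` around the positive axis. -/
def boundedSector : Set ℂ := {w | 0 ≤ w.re ∧ w.re ≤ 3 / 2 ∧ 3 * w.im ^ 2 ≤ w.re ^ 2}

theorem eq_zero_of_mem_boundedSector {w : ℂ} (hw : w ∈ boundedSector) (h : w.re = 0) :
    w = 0 := by
  have h3 := hw.2.2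
  rw [h] at h3
  exact Complex.ext h (pow_eq_zero_iff two_ne_zero |>.1 (le_antisymm (by linarith) (sq_nonneg _)))

theorem abs_im_mul_im_le {w x : ℂ} (hw : w ∈ boundedSector) (hx : x ∈ boundedSector) :
    |w.im * x.im| ≤ w.re * x.re / 3 := by
  obtain ⟨ha, -, hb⟩ := hw
  obtain ⟨hc, -, hd⟩ := hx
  refine abs_le_of_sq_le_sq ?_ (by positivity)
  have := mul_le_mul hb hd (by positivity) (by positivity)
  nlinarith

theorem re_sq_mul_nonneg {w x : ℂ} (hw : w ∈ boundedSector) (hx : x ∈ boundedSector) :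
    0 ≤ (w ^ 2 * x).re := by
  have h := abs_le.1 (abs_im_mul_im_le hw hx)
  obtain ⟨ha, -, hb⟩ := hw
  have hc := hx.1
  simp [pow_succ]
  nlinarith [mul_nonneg hc (sub_nonneg.2 hb), mul_nonneg ha (sub_nonneg.2 h.2),
    mul_nonneg (mul_nonneg ha ha) hc]

theorem re_sq_ge {w : ℂ} (hw : w ∈ boundedSector) : 2 / 3 * w.re ^ 2 ≤ (w ^ 2).re := by
  have := hw.2.2
  simp [pow_succ]
  nlinarith

theorem re_paramDen_ge {w x : ℂ} (hw : w ∈ boundedSector) (hx : x ∈ boundedSector) :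
    w.re + x.re ≤ (paramDen w x).re := by
  have h1 := re_sq_mul_nonneg hw hw
  have h2 := re_sq_mul_nonneg hx hx
  have h3 := re_sq_mul_nonneg hw hx
  have h4 := re_sq_mul_nonneg hx hw
  have h5 := re_sq_ge hw
  have h6 := re_sq_ge hx
  have h := abs_le.1 (abs_im_mul_im_le hw hx)
  have h7 : 2 / 3 * (w.re * x.re) ≤ (w * x).re := by
    rw [Complex.mul_re]
    linarith [h.2]
  have h8 : -(2 * (w.re * x.re)) ≤ (w ^ 2 * x ^ 2).re := by
    obtain ⟨ha, ha', hb⟩ := hw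
    obtain ⟨hc, hc', hd⟩ := hx
    have hac : 0 ≤ w.re * x.re := mul_nonneg ha hc
    have hac' : w.re * x.re ≤ 9 / 4 := by nlinarith
    have hre : 4 / 9 * (w.re * x.re) ^ 2 ≤ (w.re * x.re - w.im * x.im) ^ 2 := by
      nlinarith [h.2]
    have him : (w.re * x.im + w.im * x.re) ^ 2 ≤ 4 / 3 * (w.re * x.re) ^ 2 := by
      nlinarith [mul_nonneg hac (sub_nonneg.2 h.2), mul_nonneg (sq_nonneg w.re) (sub_nonneg.2 hd),
        mul_nonneg (sq_nonneg x.re) (sub_nonneg.2 hb)]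
    have hexp : (w ^ 2 * x ^ 2).re
        = (w.re * x.re - w.im * x.im) ^ 2 - (w.re * x.im + w.im * x.re) ^ 2 := by
      rw [← mul_pow, pow_two, Complex.mul_re, Complex.mul_re, Complex.mul_im]
      ring
    rw [hexp]
    nlinarith
  have hsum : (paramDen w x).re = w.re + x.re + (w ^ 2).re + (w * x).re + (x ^ 2).re
      + (w ^ 2 * w).re + (w ^ 2 * x).re + (x ^ 2 * w).re + (x ^ 2 * x).re
      + (w ^ 2 * x ^ 2).re := by
    rw [paramDen, ← pow_succ, ← pow_succ, mul_comm (x ^ 2) w]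
    simp only [Complex.add_re]
  rw [hsum]
  nlinarith [sq_nonneg (w.re - x.re)]

/-! ### The analytic continuation in the variables `u`, `v` -/

/-- The coordinate `w` of the point `u`, inverting `w ↦ û(1 - w)`. -/
noncomputable def coord (u : ℂ) : ℂ := branch (1 - u / uc)

/-- The analytic continuation of `Z`. -/
noncomputable def Zext (u v : ℂ) : ℂ :=
  paramNum (coord u) (coord v) / (10 * paramDen (coord u) (coord v))

theorem re_one_sub_div_uc (v : ℂ) : (1 - v / uc).re = 1 - v.re / uc := by
  rw [Complex.sub_re, Complex.div_ofReal_re, Complex.one_re]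

theorem im_one_sub_div_uc (v : ℂ) : (1 - v / uc).im = -(v.im / uc) := by
  rw [Complex.sub_im, Complex.div_ofReal_im, Complex.one_im, zero_sub]

theorem one_sub_div_mem_branchDomain {v : ℂ} (hv : ‖v‖ < 2 * uc)
    (hslit : v.im = 0 → v.re < uc) : 1 - v / uc ∈ branchDomain := by
  have hU := uc_pos
  refine ⟨?_, ?_⟩
  · by_cases him : v.im = 0
    · left
      rw [re_one_sub_div_uc, sub_pos, div_lt_one hU]
      exact hslit him
    · right
      rw [im_one_sub_div_uc]
      simp [him, hU.ne']
  · rw [mem_ball_zero_iff]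
    refine (norm_sub_le _ _).trans_lt ?_
    rw [norm_div, Complex.norm_real, Real.norm_of_nonneg hU.le, norm_one]
    have : ‖v‖ / uc < 2 := by rwa [div_lt_iff₀ hU]
    linarith

theorem one_sub_div_mem_branchDomain_of_norm_le {v : ℂ} (hv : ‖v‖ ≤ uc) (hne : v ≠ uc) :
    1 - v / uc ∈ branchDomain := by
  have hU := uc_pos
  refine one_sub_div_mem_branchDomain (by linarith) fun him => ?_
  refine ((Complex.re_le_norm v).trans hv).lt_of_ne fun h => hne ?_
  exact Complex.ext (by simpa using h) (by simpa using him)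

theorem ne_uc_of_norm_lt {v : ℂ} (hv : ‖v‖ < uc) : v ≠ uc := by
  rintro rfl
  rw [Complex.norm_real, Real.norm_of_nonneg uc_pos.le] at hv
  exact lt_irrefl _ hv

theorem one_sub_div_mem_insert {u : ℂ} (hu : ‖u‖ ≤ uc) :
    1 - u / uc ∈ insert 0 branchDomain := by
  by_cases h : u = uc
  · left
    rw [h, div_self (by exact_mod_cast uc_pos.ne'), sub_self]
  · exact Or.inr (one_sub_div_mem_branchDomain_of_norm_le hu h)

theorem uhat_one_sub_coord {u : ℂ} (hu : 1 - u / uc ∈ insert 0 branchDomain) :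
    uhat (1 - coord u) = u := by
  have hU : (uc : ℂ) ≠ 0 := by exact_mod_cast uc_pos.ne'
  rw [uhat_one_sub, coord, branch_equation hu]
  field_simp
  ring

theorem coord_zero : coord 0 = 1 := by
  rw [coord, zero_div, sub_zero, branch_one]

theorem coord_ne_one {u : ℂ} (hu : 1 - u / uc ∈ insert 0 branchDomain) (h0 : u ≠ 0) :
    coord u ≠ 1 := by
  intro h
  apply h0
  rw [← uhat_one_sub_coord hu, h]
  simp [uhat]

theorem coord_mem_boundedSector {u : ℂ} (hu : ‖u‖ ≤ uc) : coord u ∈ boundedSector := by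
  have hmem := one_sub_div_mem_insert hu
  have hU := uc_pos
  refine ⟨branch_re_nonneg _, (Complex.re_le_norm _).trans ?_, branch_im_sq_le hmem ?_⟩
  · have h := congrArg norm (branch_equation hmem)
    rw [norm_mul, norm_pow, norm_mul, Complex.norm_ofNat] at h
    have h2 : ‖1 - u / uc‖ ≤ 2 := by
      refine (norm_sub_le _ _).trans ?_
      rw [norm_div, Complex.norm_real, Real.norm_of_nonneg hU.le, norm_one]
      have : ‖u‖ / uc ≤ 1 := by rwa [div_le_one hU]
      linarith
    have h3 := two_le_norm_two_add (branch_re_nonneg (1 - u / uc))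
    rw [coord]
    by_contra! hc
    have : (3 / 2 : ℝ) ^ 3 < ‖branch (1 - u / uc)‖ ^ 3 := by gcongr
    norm_num at this
    nlinarith
  · rw [re_one_sub_div_uc, sub_nonneg, div_le_one hU]
    exact (Complex.re_le_norm u).trans hu

theorem coord_ne_zero {u : ℂ} (hu : 1 - u / uc ∈ branchDomain) : coord u ≠ 0 :=
  branch_ne_zero hu

theorem paramDen_coord_ne_zero {u v : ℂ} (hu : ‖u‖ ≤ uc) (hv : ‖v‖ ≤ uc) (hne : v ≠ uc) :
    paramDen (coord u) (coord v) ≠ 0 := by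
  have hsu := coord_mem_boundedSector hu
  have hsv := coord_mem_boundedSector hv
  have hpos : 0 < (coord v).re := hsv.1.lt_of_ne fun h =>
    coord_ne_zero (one_sub_div_mem_branchDomain_of_norm_le hv hne)
      (eq_zero_of_mem_boundedSector hsv h.symm)
  intro h
  have := re_paramDen_ge hsu hsv
  rw [h, Complex.zero_re] at this
  linarith [hsu.1]

theorem differentiableAt_coord {u : ℂ} (hu : 1 - u / uc ∈ branchDomain) :
    DifferentiableAt ℂ coord u :=
  DifferentiableAt.comp u (differentiableAt_branch hu) (by fun_prop)

theorem continuousWithinAt_coord {u : ℂ} (hu : ‖u‖ ≤ uc) :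
    ContinuousWithinAt coord (Metric.closedBall 0 uc) u := by
  refine ContinuousWithinAt.comp (t := insert 0 branchDomain)
    (continuousWithinAt_branch (one_sub_div_mem_insert hu)) ?_ fun v hv => ?_
  · exact Continuous.continuousWithinAt (by fun_prop)
  · exact one_sub_div_mem_insert (by simpa using hv)

theorem differentiableAt_Zext {f g : ℂ → ℂ} {y : ℂ} (hf : DifferentiableAt ℂ (coord ∘ f) y)
    (hg : DifferentiableAt ℂ (coord ∘ g) y)
    (hD : paramDen (coord (f y)) (coord (g y)) ≠ 0) :
    DifferentiableAt ℂ (fun y => Zext (f y) (g y)) y := by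
  have hpair : DifferentiableAt ℂ (fun y => (coord (f y), coord (g y))) y := hf.prodMk hg
  have hN := (differentiable_paramNum (coord (f y), coord (g y))).comp y hpair
  have hD' := (differentiable_paramDen (coord (f y), coord (g y))).comp y hpair
  exact hN.div (hD'.const_mul 10) (mul_ne_zero (by norm_num) hD)

theorem differentiableAt_Zext_right (u : ℂ) {v : ℂ} (hv : 1 - v / uc ∈ branchDomain)
    (hD : paramDen (coord u) (coord v) ≠ 0) : DifferentiableAt ℂ (Zext u) v :=
  differentiableAt_Zext (f := fun _ => u) (g := id) (differentiableAt_const _)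
    (differentiableAt_coord hv) hD

theorem differentiableOn_Zext_right {u : ℂ} (hu : ‖u‖ ≤ uc) :
    DifferentiableOn ℂ (Zext u) (Metric.ball 0 uc) := by
  intro v hv
  rw [mem_ball_zero_iff] at hv
  exact (differentiableAt_Zext_right u
    (one_sub_div_mem_branchDomain_of_norm_le hv.le (ne_uc_of_norm_lt hv))
    (paramDen_coord_ne_zero hu hv.le (ne_uc_of_norm_lt hv))).differentiableWithinAt

theorem differentiableOn_Zext_left {v : ℂ} (hv : ‖v‖ < uc) :
    DifferentiableOn ℂ (fun u => Zext u v) (Metric.ball 0 uc) := by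
  intro u hu
  rw [mem_ball_zero_iff] at hu
  exact (differentiableAt_Zext (f := id) (g := fun _ => v)
    (differentiableAt_coord
      (one_sub_div_mem_branchDomain_of_norm_le hu.le (ne_uc_of_norm_lt hu)))
    (differentiableAt_const _)
    (paramDen_coord_ne_zero hu.le hv.le (ne_uc_of_norm_lt hv))).differentiableWithinAt

theorem continuousWithinAt_Zext_left {u v : ℂ} (hu : ‖u‖ ≤ uc) (hv : ‖v‖ < uc) :
    ContinuousWithinAt (fun u => Zext u v) (Metric.closedBall 0 uc) u := by
  have hpair : ContinuousWithinAt (fun u => (coord u, coord v)) (Metric.closedBall 0 uc) u :=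
    (continuousWithinAt_coord hu).prodMk continuousWithinAt_const
  have hN := differentiable_paramNum.continuous.continuousAt.comp_continuousWithinAt hpair
  have hD := differentiable_paramDen.continuous.continuousAt.comp_continuousWithinAt hpair
  exact hN.div (continuousWithinAt_const.mul hD)
    (mul_ne_zero (by norm_num) (paramDen_coord_ne_zero hu hv.le (ne_uc_of_norm_lt hv)))

/-! ### Power series with nonnegative coefficients -/

theorem hasFPowerSeriesAt_of_hasSum {a : ℕ → ℂ} {S : ℂ → ℂ}
    (h : ∀ᶠ v in nhds (0 : ℂ), HasSum (fun n => a n * v ^ n) (S v)) :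
    HasFPowerSeriesAt S (FormalMultilinearSeries.ofScalars ℂ a) 0 := by
  rw [hasFPowerSeriesAt_iff]
  filter_upwards [h] with v hv
  simpa [FormalMultilinearSeries.coeff_ofScalars, mul_comm] using hv

/-- If a power series agrees near `0` with a function that is holomorphic on a disk, then it
converges to this function on the whole disk. -/
theorem hasSum_of_eventually_eq {a : ℕ → ℂ} {S F : ℂ → ℂ} {R : ℝ}
    (hF : DifferentiableOn ℂ F (Metric.ball 0 R))
    (hS : ∀ᶠ v in nhds (0 : ℂ), HasSum (fun n => a n * v ^ n) (S v))
    (hSF : ∀ᶠ v in nhdsWithin (0 : ℂ) {0}ᶜ, S v = F v) {v : ℂ} (hv : ‖v‖ < R) :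
    HasSum (fun n => a n * v ^ n) (F v) := by
  obtain ⟨r, hvr, hrR⟩ := exists_between hv
  lift r to NNReal using (norm_nonneg v).trans hvr.le
  have hr : 0 < r := by exact_mod_cast (norm_nonneg v).trans_lt hvr
  have hball : HasFPowerSeriesOnBall F (cauchyPowerSeries F 0 r) 0 r :=
    (hF.mono (Metric.closedBall_subset_ball hrR)).hasFPowerSeriesOnBall hr
  have hSser := hasFPowerSeriesAt_of_hasSum hS
  have heq : S =ᶠ[nhds 0] F :=
    (hSser.continuousAt.eventuallyEq_nhds_iff_eventuallyEq_nhdsNE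
      hball.analyticAt.continuousAt).1 hSF
  have hser := (hSser.congr heq).eq_formalMultilinearSeries hball.hasFPowerSeriesAt
  have hsum := hball.hasSum (y := v) (by simpa [← ofReal_norm] using hvr)
  rw [← hser] at hsum
  simpa [FormalMultilinearSeries.apply_eq_pow_smul_coeff, FormalMultilinearSeries.coeff_ofScalars,
    mul_comm] using hsum

/-- Convergence of a double power series at the point `(r, R)`. -/
def DoubleSummable (z : ℕ → ℕ → ℝ) (r R : ℝ) : Prop :=
  Summable fun pq : ℕ × ℕ => z pq.1 pq.2 * r ^ pq.1 * R ^ pq.2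

section DoubleSeries

variable {z : ℕ → ℕ → ℝ}

theorem DoubleSummable.swap {r R : ℝ} (h : DoubleSummable z r R) :
    DoubleSummable (fun p q => z q p) R r := by
  have := (Equiv.prodComm ℕ ℕ).summable_iff.2 h
  exact this.congr fun pq => mul_right_comm _ _ _

theorem DoubleSummable.summable_complex (hz : ∀ p q, 0 ≤ z p q) {r R : ℝ}
    (h : DoubleSummable z r R) {u v : ℂ} (hu : ‖u‖ ≤ r) (hv : ‖v‖ ≤ R) :
    Summable fun pq : ℕ × ℕ => (z pq.1 pq.2 : ℂ) * u ^ pq.1 * v ^ pq.2 := by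
  refine Summable.of_norm_bounded h fun pq => ?_
  rw [norm_mul, norm_mul, norm_pow, norm_pow, Complex.norm_real, Real.norm_of_nonneg (hz _ _)]
  have := hz pq.1 pq.2
  have := (norm_nonneg u).trans hu
  gcongr

theorem DoubleSummable.of_hasSum {r R : ℝ} {S : ℂ}
    (h : HasSum (fun pq : ℕ × ℕ => (z pq.1 pq.2 : ℂ) * (r : ℂ) ^ pq.1 * (R : ℂ) ^ pq.2) S) :
    DoubleSummable z r R := by
  rw [DoubleSummable, ← Complex.summable_ofReal]
  simpa using h.summable

theorem HasSum.sum_columns {u v S : ℂ}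
    (h : HasSum (fun pq : ℕ × ℕ => (z pq.1 pq.2 : ℂ) * u ^ pq.1 * v ^ pq.2) S) :
    HasSum (fun q => (∑' p, (z p q : ℂ) * u ^ p) * v ^ q) S := by
  have hswap := (Equiv.prodComm ℕ ℕ).hasSum_iff.2 h
  refine hswap.prod_fiberwise fun q => ?_
  rw [← tsum_mul_right]
  exact (hswap.summable.prod_factor q).hasSum

theorem HasSum.sum_rows {u v S : ℂ}
    (h : HasSum (fun pq : ℕ × ℕ => (z pq.1 pq.2 : ℂ) * u ^ pq.1 * v ^ pq.2) S) :
    HasSum (fun p => (∑' q, (z p q : ℂ) * v ^ q) * u ^ p) S := by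
  refine h.prod_fiberwise fun p => ?_
  rw [← tsum_mul_right]
  have hcomm : ∀ q, (z p q : ℂ) * v ^ q * u ^ p = (z p q : ℂ) * u ^ p * v ^ q :=
    fun q => mul_right_comm _ _ _
  simp only [hcomm]
  exact (h.summable.prod_factor p).hasSum

theorem DoubleSummable.summable_column {r R : ℝ} (h : DoubleSummable z r R) (hR : R ≠ 0)
    (q : ℕ) : Summable fun p => z p q * r ^ p :=
  (summable_mul_right_iff (pow_ne_zero q hR)).1
    ((h.swap.prod_factor q).congr fun _ => mul_right_comm _ _ _)

theorem doubleSummable_of_summable_columns (hz : ∀ p q, 0 ≤ z p q) {r R : ℝ} (hr : 0 ≤ r)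
    (hR : 0 ≤ R) (hcol : ∀ q, Summable fun p => z p q * r ^ p)
    (h : Summable fun q => (∑' p, (z p q : ℂ) * (r : ℂ) ^ p) * (R : ℂ) ^ q) :
    DoubleSummable z r R := by
  have hreal : Summable fun q => (∑' p, z p q * r ^ p) * R ^ q := by
    rw [← Complex.summable_ofReal]
    refine h.congr fun q => ?_
    push_cast
    rfl
  suffices hswap : DoubleSummable (fun p q => z q p) R r from hswap.swap
  refine (summable_prod_of_nonneg fun pq => ?_).2 ⟨fun q => ?_, ?_⟩
  · have := hz pq.2 pq.1
    simp only [Pi.zero_apply]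
    positivity
  · exact ((hcol q).mul_right (R ^ q)).congr fun p => mul_right_comm _ _ _
  · refine hreal.congr fun q => ?_
    rw [← tsum_mul_right]
    exact tsum_congr fun p => mul_right_comm _ _ _

end DoubleSeries

/-! ### Convergence of the double series on the closed bidisk -/

section Convergence

variable {z : ℕ → ℕ → ℝ}

/-- The local form of the functional equation in the variables `u`, `v`. -/
def LocalEquation (z : ℕ → ℕ → ℝ) (δ : ℝ) : Prop :=
  ∀ u v : ℂ, ‖u‖ < δ → ‖v‖ < δ → ∃ S : ℂ,
    HasSum (fun pq : ℕ × ℕ => (z pq.1 pq.2 : ℂ) * u ^ pq.1 * v ^ pq.2) S ∧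
      kernelFactor (coord u) (coord v)
        * (10 * paramDen (coord u) (coord v) * S - paramNum (coord u) (coord v)) = 0

theorem cubic_ne_zero_of_mem_boundedSector {w : ℂ} (hw : w ∈ boundedSector) :
    3 + 3 * w + 3 * w ^ 2 + w ^ 3 ≠ 0 := by
  intro h
  have hre := congrArg Complex.re h
  have h2 := re_sq_ge hw
  have h3 := re_sq_mul_nonneg hw hw
  rw [← pow_succ] at h3
  have h3' : (3 * w ^ 2).re = 3 * (w ^ 2).re := by simp
  have h1' : (3 * w).re = 3 * w.re := by simp
  rw [Complex.add_re, Complex.add_re, Complex.add_re, h3', h1', Complex.zero_re] at hre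
  norm_num at hre h2 h3
  nlinarith [hw.1, sq_nonneg w.re]

theorem exists_localEquation {ρ : ℝ} (hρ : 0 < ρ)
    (hZ : ∀ H K : ℂ, ‖H‖ < ρ → ‖K‖ < ρ → ∃ ZHK : ℂ,
      HasSum (fun pq : ℕ × ℕ => (z pq.1 pq.2 : ℂ) * uhat H ^ pq.1 * uhat K ^ pq.2) ZHK ∧
      ((nuc : ℂ) * uhat K * uhat H - uhat H ^ 2
          - ((nuc : ℂ) ^ 2 - 1) * (tc : ℂ) * uhat K * (Z0hat H + uhat H * Z1hat K))
          * (ZHK - Z0hat K)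
        = uhat H ^ 2 * (Z0hat K - Z0hat H)
          + ((nuc : ℂ) ^ 2 - 1) * uhat H * uhat K
            * (uhat H ^ 2 - (tc : ℂ) * Z0hat H * Z1hat K)) :
    ∃ δ, 0 < δ ∧ δ ≤ uc ∧ LocalEquation z δ := by
  have hU := uc_pos
  have hcont : ContinuousAt coord 0 := (differentiableAt_coord
    (one_sub_div_mem_branchDomain_of_norm_le (by simpa using hU.le)
      (by exact_mod_cast hU.ne))).continuousAt
  obtain ⟨δ, hδ, hclose⟩ := Metric.continuousAt_iff.1 hcont ρ hρ
  have hnear : ∀ u : ℂ, ‖u‖ < min δ uc → ‖1 - coord u‖ < ρ := by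
    intro u hu
    have := hclose (x := u) (by simpa using hu.trans_le (min_le_left _ _))
    rwa [coord_zero, dist_comm, dist_eq_norm] at this
  refine ⟨min δ uc, lt_min hδ hU, min_le_right _ _, fun u v hu hv => ?_⟩
  have hu' : ‖u‖ ≤ uc := hu.le.trans (min_le_right _ _)
  have hv' : ‖v‖ ≤ uc := hv.le.trans (min_le_right _ _)
  obtain ⟨S, hS, heq⟩ := hZ _ _ (hnear u hu) (hnear v hv)
  have hfac := kernel_equation_factored
    (cubic_ne_zero_of_mem_boundedSector (coord_mem_boundedSector hv')) heq
  rw [uhat_one_sub_coord (one_sub_div_mem_insert hu'),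
    uhat_one_sub_coord (one_sub_div_mem_insert hv')] at hS
  rw [mul_assoc] at hfac
  exact ⟨S, hS, (mul_eq_zero.1 hfac).resolve_left
    (cubic_ne_zero_of_mem_boundedSector (coord_mem_boundedSector hu'))⟩

theorem eventually_kernelFactor_ne_zero (u : ℂ) :
    ∀ᶠ v in nhdsWithin (0 : ℂ) {0}ᶜ, kernelFactor (coord u) (coord v) ≠ 0 := by
  have hU := uc_pos
  have hball : ∀ᶠ v in nhdsWithin (0 : ℂ) {0}ᶜ, ‖v‖ < uc :=
    nhdsWithin_le_nhds ((continuous_norm.tendsto' (0 : ℂ) 0 norm_zero).eventually_lt_const hU)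
  by_cases h : coord u = 1
  · filter_upwards [hball, self_mem_nhdsWithin] with v hv hv0
    rw [h, kernelFactor]
    have := coord_ne_one (one_sub_div_mem_insert hv.le) hv0
    simpa [sub_eq_zero] using this.symm
  · refine nhdsWithin_le_nhds (ContinuousAt.eventually_ne ?_ ?_)
    · have hcont : ContinuousAt coord 0 := (differentiableAt_coord
        (one_sub_div_mem_branchDomain_of_norm_le (by simpa using hU.le)
          (by exact_mod_cast hU.ne))).continuousAt
      unfold kernelFactor
      fun_prop
    · rw [coord_zero, kernelFactor]
      simpa [sub_eq_zero] using Ne.symm h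

theorem LocalEquation.hasSum_columns {δ : ℝ} (hδ : 0 < δ) (hδU : δ ≤ uc)
    (hloc : LocalEquation z δ) {u v : ℂ} (hu : ‖u‖ < δ) (hv : ‖v‖ < uc) :
    HasSum (fun q => (∑' p, (z p q : ℂ) * u ^ p) * v ^ q) (Zext u v) := by
  have hball : ∀ᶠ v in nhds (0 : ℂ), ‖v‖ < δ :=
    (continuous_norm.tendsto' (0 : ℂ) 0 norm_zero).eventually_lt_const hδ
  refine hasSum_of_eventually_eq
    (S := fun v => ∑' q, (∑' p, (z p q : ℂ) * u ^ p) * v ^ q)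
    (differentiableOn_Zext_right (hu.le.trans hδU)) ?_ ?_ hv
  · filter_upwards [hball] with v hv
    obtain ⟨S, hS, -⟩ := hloc u v hu hv
    exact hS.sum_columns.summable.hasSum
  · filter_upwards [nhdsWithin_le_nhds hball, eventually_kernelFactor_ne_zero u] with v hv hk
    obtain ⟨S, hS, heq⟩ := hloc u v hu hv
    have hvU := hv.trans_le hδU
    have hD := paramDen_coord_ne_zero (hu.le.trans hδU) hvU.le (ne_uc_of_norm_lt hvU)
    rw [hS.sum_columns.tsum_eq, Zext, eq_div_iff (mul_ne_zero (by norm_num) hD)]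
    linear_combination (mul_eq_zero.1 heq).resolve_left hk

theorem LocalEquation.doubleSummable_left (hz : ∀ p q, 0 ≤ z p q) {δ : ℝ} (hδ : 0 < δ)
    (hδU : δ ≤ uc) (hloc : LocalEquation z δ) {r R : ℝ} (hr : 0 ≤ r) (hrδ : r < δ) (hR : 0 ≤ R)
    (hRU : R < uc) : DoubleSummable z r R := by
  have hrn : ‖(r : ℂ)‖ < δ := by rwa [Complex.norm_real, Real.norm_of_nonneg hr]
  have hRn : ‖(R : ℂ)‖ < uc := by rwa [Complex.norm_real, Real.norm_of_nonneg hR]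
  refine doubleSummable_of_summable_columns hz hr hR ?_
    (hloc.hasSum_columns hδ hδU hrn hRn).summable
  obtain ⟨S, hS, -⟩ := hloc r (δ / 2 : ℝ) hrn (by
    rw [Complex.norm_real, Real.norm_of_nonneg (by positivity)]
    linarith)
  exact (DoubleSummable.of_hasSum hS).summable_column (by positivity)

theorem LocalEquation.hasSum_rows (hz : ∀ p q, 0 ≤ z p q) {δ : ℝ} (hδ : 0 < δ)
    (hδU : δ ≤ uc) (hloc : LocalEquation z δ) {u v : ℂ} (hu : ‖u‖ < uc) (hv : ‖v‖ < uc) :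
    HasSum (fun p => (∑' q, (z p q : ℂ) * v ^ q) * u ^ p) (Zext u v) := by
  have hlocal : ∀ u : ℂ, ‖u‖ < δ →
      HasSum (fun p => (∑' q, (z p q : ℂ) * v ^ q) * u ^ p) (Zext u v) := by
    intro u hu
    have hsum := ((hloc.doubleSummable_left hz hδ hδU (norm_nonneg u) hu (norm_nonneg v)
      hv).summable_complex hz le_rfl le_rfl).hasSum
    rw [(hloc.hasSum_columns hδ hδU hu hv).unique hsum.sum_columns]
    exact hsum.sum_rows
  refine hasSum_of_eventually_eq (S := fun u => Zext u v) (differentiableOn_Zext_left hv) ?_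
    (Filter.Eventually.of_forall fun _ => rfl) hu
  filter_upwards [(continuous_norm.tendsto' (0 : ℂ) 0 norm_zero).eventually_lt_const hδ]
    with u hu using hlocal u hu

theorem LocalEquation.doubleSummable (hz : ∀ p q, 0 ≤ z p q) {δ : ℝ} (hδ : 0 < δ)
    (hδU : δ ≤ uc) (hloc : LocalEquation z δ) {r R : ℝ} (hr : 0 ≤ r) (hrU : r < uc) (hR : 0 ≤ R)
    (hRU : R < uc) : DoubleSummable z r R := by
  have hrn : ‖(r : ℂ)‖ < uc := by rwa [Complex.norm_real, Real.norm_of_nonneg hr]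
  have hRn : ‖(R : ℂ)‖ < uc := by rwa [Complex.norm_real, Real.norm_of_nonneg hR]
  refine (doubleSummable_of_summable_columns (z := fun p q => z q p) (fun p q => hz q p) hR hr
    ?_ (hloc.hasSum_rows hz hδ hδU hrn hRn).summable).swap
  exact (hloc.doubleSummable_left hz hδ hδU (half_pos hδ).le (half_lt_self hδ) hR
    hRU).swap.summable_column (half_pos hδ).ne'

theorem LocalEquation.hasSum_of_lt (hz : ∀ p q, 0 ≤ z p q) {δ : ℝ} (hδ : 0 < δ)
    (hδU : δ ≤ uc) (hloc : LocalEquation z δ) {u v : ℂ} (hu : ‖u‖ < uc) (hv : ‖v‖ < uc) :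
    HasSum (fun pq : ℕ × ℕ => (z pq.1 pq.2 : ℂ) * u ^ pq.1 * v ^ pq.2) (Zext u v) := by
  have hsum := ((hloc.doubleSummable hz hδ hδU (norm_nonneg u) hu (norm_nonneg v)
    hv).summable_complex hz le_rfl le_rfl).hasSum
  rwa [(hloc.hasSum_rows hz hδ hδU hu hv).unique hsum.sum_rows]

theorem tendsto_Zext_radial {u v : ℂ} (hu : ‖u‖ ≤ uc) (hv : ‖v‖ < uc) :
    Filter.Tendsto (fun t : ℝ => Zext (t * u) v) (nhdsWithin 1 (Set.Ioo 0 1))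
      (nhds (Zext u v)) := by
  refine (continuousWithinAt_Zext_left hu hv).tendsto.comp
    (tendsto_nhdsWithin_iff.2 ⟨tendsto_nhdsWithin_of_tendsto_nhds ?_, ?_⟩)
  · exact Continuous.tendsto' (by fun_prop) _ _ (by simp)
  · filter_upwards [self_mem_nhdsWithin] with t ht
    rw [mem_closedBall_zero_iff, norm_mul, Complex.norm_real, Real.norm_of_nonneg ht.1.le]
    nlinarith [ht.1, ht.2, norm_nonneg u]

theorem norm_radial_lt {u : ℂ} (hu : ‖u‖ ≤ uc) {t : ℝ} (ht : t ∈ Set.Ioo (0 : ℝ) 1) :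
    ‖(t : ℂ) * u‖ < uc := by
  rw [norm_mul, Complex.norm_real, Real.norm_of_nonneg ht.1.le]
  nlinarith [ht.1, ht.2, norm_nonneg u, uc_pos]

theorem neBot_nhdsWithin_one_Ioo : (nhdsWithin (1 : ℝ) (Set.Ioo 0 1)).NeBot := by
  rw [nhdsWithin_Ioo_eq_nhdsLT one_pos]
  infer_instance

theorem LocalEquation.doubleSummable_uc (hz : ∀ p q, 0 ≤ z p q) {δ : ℝ} (hδ : 0 < δ)
    (hδU : δ ≤ uc) (hloc : LocalEquation z δ) {R : ℝ} (hR : 0 ≤ R) (hRU : R < uc) :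
    DoubleSummable z uc R := by
  have := neBot_nhdsWithin_one_Ioo
  have hU := uc_pos
  have hUn : ‖(uc : ℂ)‖ ≤ uc := by rw [Complex.norm_real, Real.norm_of_nonneg hU.le]
  have hRn : ‖(R : ℂ)‖ < uc := by rwa [Complex.norm_real, Real.norm_of_nonneg hR]
  refine summable_of_sum_le (c := (Zext uc R).re) (fun pq => ?_) fun s => ?_
  · have := hz pq.1 pq.2
    positivity
  have hlim : Filter.Tendsto
      (fun t : ℝ => ∑ pq ∈ s, z pq.1 pq.2 * (t * uc) ^ pq.1 * R ^ pq.2)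
      (nhdsWithin 1 (Set.Ioo 0 1)) (nhds (∑ pq ∈ s, z pq.1 pq.2 * uc ^ pq.1 * R ^ pq.2)) :=
    tendsto_nhdsWithin_of_tendsto_nhds (Continuous.tendsto' (by fun_prop) _ _ (by simp))
  have hre := (Complex.continuous_re.tendsto _).comp (tendsto_Zext_radial hUn hRn)
  refine le_of_tendsto_of_tendsto hlim hre ?_
  filter_upwards [self_mem_nhdsWithin] with t ht
  have hsum := Complex.hasSum_re (hloc.hasSum_of_lt hz hδ hδU (norm_radial_lt hUn ht) hRn)
  have hcast : ∀ pq : ℕ × ℕ, ((z pq.1 pq.2 : ℂ) * ((t : ℂ) * uc) ^ pq.1 * (R : ℂ) ^ pq.2).re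
      = z pq.1 pq.2 * (t * uc) ^ pq.1 * R ^ pq.2 := fun pq => by
    rw [← Complex.ofReal_re (z pq.1 pq.2 * (t * uc) ^ pq.1 * R ^ pq.2)]
    push_cast
    rfl
  simp only [hcast] at hsum
  refine sum_le_hasSum s (fun pq _ => ?_) hsum
  have := hz pq.1 pq.2
  have := ht.1
  positivity

/-- The double series converges to the analytic continuation for `‖u‖ ≤ uc`, `‖v‖ < uc`. -/
theorem LocalEquation.hasSum (hz : ∀ p q, 0 ≤ z p q) {δ : ℝ} (hδ : 0 < δ)
    (hδU : δ ≤ uc) (hloc : LocalEquation z δ) {u v : ℂ} (hu : ‖u‖ ≤ uc) (hv : ‖v‖ < uc) :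
    HasSum (fun pq : ℕ × ℕ => (z pq.1 pq.2 : ℂ) * u ^ pq.1 * v ^ pq.2) (Zext u v) := by
  have := neBot_nhdsWithin_one_Ioo
  have hdom := hloc.doubleSummable_uc hz hδ hδU (norm_nonneg v) hv
  have hlim : Filter.Tendsto
      (fun t : ℝ => ∑' pq : ℕ × ℕ, (z pq.1 pq.2 : ℂ) * ((t : ℂ) * u) ^ pq.1 * v ^ pq.2)
      (nhdsWithin 1 (Set.Ioo 0 1))
      (nhds (∑' pq : ℕ × ℕ, (z pq.1 pq.2 : ℂ) * u ^ pq.1 * v ^ pq.2)) := by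
    refine tendsto_tsum_of_dominated_convergence hdom (fun pq => ?_) ?_
    · exact tendsto_nhdsWithin_of_tendsto_nhds
        (Continuous.tendsto' (by fun_prop) _ _ (by simp))
    · filter_upwards [self_mem_nhdsWithin] with t ht pq
      have := hz pq.1 pq.2
      rw [norm_mul, norm_mul, norm_pow, norm_pow, Complex.norm_real, Real.norm_of_nonneg this]
      have := (norm_radial_lt hu ht).le
      gcongr
  have hlim' := tendsto_Zext_radial hu hv
  have heq : ∀ᶠ t : ℝ in nhdsWithin 1 (Set.Ioo 0 1),
      ∑' pq : ℕ × ℕ, (z pq.1 pq.2 : ℂ) * ((t : ℂ) * u) ^ pq.1 * v ^ pq.2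
        = Zext (t * u) v := by
    filter_upwards [self_mem_nhdsWithin] with t ht
    exact (hloc.hasSum_of_lt hz hδ hδU (norm_radial_lt hu ht) hv).tsum_eq
  rw [← tendsto_nhds_unique (hlim.congr' heq) hlim']
  exact (hdom.summable_complex hz hu le_rfl).hasSum

end Convergence

/-! ### The singularity at `uc` -/

theorem coeff_eq_zero_of_isBigO {ι : Type*} {l : Filter ι} [l.NeBot] {x : ι → ℂ}
    (hx : Filter.Tendsto x l (nhds 0)) (hx0 : ∀ᶠ i in l, x i ≠ 0) (n : ℕ) (p : Polynomial ℂ)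
    (h : (fun i => p.eval (x i)) =O[l] fun i => x i ^ n) {k : ℕ} (hk : k < n) :
    p.coeff k = 0 := by
  induction n generalizing p k with
  | zero => exact absurd hk (Nat.not_lt_zero k)
  | succ n ih =>
    have hlim : Filter.Tendsto (fun i => p.eval (x i)) l (nhds 0) :=
      h.trans_tendsto (by simpa using hx.pow (n + 1))
    have h0 : p.coeff 0 = 0 := by
      rw [Polynomial.coeff_zero_eq_eval_zero]
      exact tendsto_nhds_unique ((p.continuous.tendsto 0).comp hx) hlim
    have heval : ∀ y : ℂ, p.eval y = p.divX.eval y * y := by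
      intro y
      conv_lhs => rw [← Polynomial.divX_mul_X_add p]
      simp [h0]
    rcases k with _ | k
    · exact h0
    rw [← Polynomial.coeff_divX]
    refine ih p.divX ?_ (Nat.lt_of_succ_lt_succ hk)
    obtain ⟨c, hc⟩ := h.bound
    refine Asymptotics.IsBigO.of_bound c ?_
    filter_upwards [hc, hx0] with i hi hi0
    rw [heval, pow_succ, norm_mul, norm_mul, ← mul_assoc] at hi
    exact le_of_mul_le_mul_right hi (norm_pos_iff.2 hi0)

theorem AnalyticAt.exists_isBigO_sub_linear {g : ℂ → ℂ} {a : ℂ} (hg : AnalyticAt ℂ g a) :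
    ∃ c₀ c₁ : ℂ, (fun v => g v - (c₀ + c₁ * (v - a))) =O[nhds a] fun v => (v - a) ^ 2 := by
  obtain ⟨p, hp⟩ := hg
  refine ⟨p.coeff 0, p.coeff 1, ?_⟩
  have h := hp.isBigO_sub_partialSum_pow 2
  have hsub : Filter.Tendsto (fun v => v - a) (nhds a) (nhds 0) :=
    Continuous.tendsto' (by fun_prop) _ _ (by simp)
  refine ((h.comp_tendsto hsub).congr (fun v => ?_) fun v => rfl).trans
    (Asymptotics.isBigO_of_le _ fun v => by simp)
  simp [FormalMultilinearSeries.partialSum, Finset.sum_range_succ, mul_comm]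

/-- The coefficients in `x` of `paramDen w x * (c₀ + c₁ * (x³ (2 + x)))`. -/
def linearDenCoeff (w c₀ c₁ : ℂ) : ℕ → ℂ
  | 0 => c₀ * (w + w ^ 2 + w ^ 3)
  | 1 => c₀ * (1 + w + w ^ 2)
  | 2 => c₀ * (1 + w + w ^ 2)
  | 3 => c₀ + 2 * c₁ * (w + w ^ 2 + w ^ 3)
  | 4 => c₁ * (w + w ^ 2 + w ^ 3) + 2 * c₁ * (1 + w + w ^ 2)
  | 5 => 3 * c₁ * (1 + w + w ^ 2)
  | 6 => c₁ * (1 + w + w ^ 2) + 2 * c₁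
  | 7 => c₁
  | _ => 0

/-- The analytic continuation of `Z` in its second variable is singular at `uc`. -/
theorem not_analyticAt_of_eq_Zext {u : ℂ} (hu : ‖u‖ ≤ uc) {g : ℂ → ℂ} {ε : ℝ} (hε : 0 < ε)
    (hgZ : ∀ v : ℂ, ‖v‖ < uc → v ∈ Metric.ball ((uc : ℝ) : ℂ) ε → g v = Zext u v) :
    ¬ AnalyticAt ℂ g uc := by
  intro hg
  have := neBot_nhdsWithin_one_Ioo
  have hU := uc_pos
  have hUn : ‖(uc : ℂ)‖ ≤ uc := by rw [Complex.norm_real, Real.norm_of_nonneg hU.le]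
  set l := nhdsWithin (1 : ℝ) (Set.Ioo 0 1)
  set v : ℝ → ℂ := fun t => t * uc
  set w := coord u
  set x : ℝ → ℂ := fun t => coord (v t)
  have hvlt : ∀ᶠ t in l, ‖v t‖ < uc := by
    filter_upwards [self_mem_nhdsWithin] with t ht using norm_radial_lt hUn ht
  have hvlim : Filter.Tendsto v l (nhds uc) :=
    tendsto_nhdsWithin_of_tendsto_nhds (Continuous.tendsto' (by fun_prop) _ _ (by simp [v]))
  have hxlim : Filter.Tendsto x l (nhds 0) := by
    have hzero : coord uc = 0 := by
      rw [coord, div_self (by exact_mod_cast hU.ne'), sub_self, branch_zero]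
    rw [← hzero]
    refine (continuousWithinAt_coord hUn).tendsto.comp
      (tendsto_nhdsWithin_iff.2 ⟨hvlim, ?_⟩)
    filter_upwards [hvlt] with t ht
    simpa using ht.le
  have hx0 : ∀ᶠ t in l, x t ≠ 0 := by
    filter_upwards [hvlt] with t ht
    exact coord_ne_zero (one_sub_div_mem_branchDomain_of_norm_le ht.le (ne_uc_of_norm_lt ht))
  have hvx : ∀ᶠ t in l, v t - uc = -(uc / 3) * (x t ^ 3 * (2 + x t)) := by
    filter_upwards [hvlt] with t ht
    have := uhat_one_sub_coord (one_sub_div_mem_insert ht.le)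
    rw [uhat_one_sub] at this
    linear_combination -this
  obtain ⟨c₀, c₁, hO⟩ := hg.exists_isBigO_sub_linear
  set P : Polynomial ℂ := ∑ j ∈ Finset.range 10,
    Polynomial.C (paramNumCoeff w j - 10 * linearDenCoeff w c₀ (-(c₁ * uc / 3)) j)
      * Polynomial.X ^ j with hP
  have heval : ∀ y : ℂ, P.eval y = paramNum w y
      - 10 * paramDen w y * (c₀ - c₁ * uc / 3 * (y ^ 3 * (2 + y))) := by
    intro y
    rw [paramNum]
    simp only [hP, Polynomial.eval_finsetSum, Polynomial.eval_mul, Polynomial.eval_C,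
      Polynomial.eval_pow, Polynomial.eval_X, sub_mul, Finset.sum_sub_distrib]
    congr 1
    simp only [Finset.sum_range_succ, Finset.sum_range_zero, linearDenCoeff, paramDen]
    ring
  have hPO : (fun t => P.eval (x t)) =O[l] fun t => x t ^ 6 := by
    have hbdd : (fun t => 10 * paramDen w (x t)) =O[l] fun _ => (1 : ℂ) := by
      have hc : Continuous fun y => 10 * paramDen w y := by
        unfold paramDen
        fun_prop
      exact ((hc.tendsto 0).comp hxlim).isBigO_one ℂ
    have hquad : (fun t => (v t - uc) ^ 2) =O[l] fun t => x t ^ 6 := by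
      have hc : Continuous fun y : ℂ => (-(uc / 3 : ℂ) * (2 + y)) ^ 2 := by fun_prop
      have := (((hc.tendsto 0).comp hxlim).isBigO_one ℂ).mul
        (Asymptotics.isBigO_refl (fun t => x t ^ 6) l)
      refine this.congr' ?_ (Filter.Eventually.of_forall fun t => one_mul _)
      filter_upwards [hvx] with t ht
      rw [ht, Function.comp_apply]
      ring
    have := hbdd.mul ((hO.comp_tendsto hvlim).trans hquad)
    refine this.congr' ?_ (Filter.Eventually.of_forall fun t => one_mul _)
    filter_upwards [hvx, hvlt, hvlim (Metric.ball_mem_nhds _ hε)] with t ht htlt htball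
    have hD := paramDen_coord_ne_zero hu htlt.le (ne_uc_of_norm_lt htlt)
    have hZ : 10 * paramDen w (x t) * g (v t) = paramNum w (x t) := by
      rw [hgZ _ htlt htball, Zext, mul_div_cancel₀]
      exact mul_ne_zero (by norm_num) hD
    rw [heval, Function.comp_apply, ht, ← hZ]
    ring
  have hcoeff : ∀ k < 6,
      paramNumCoeff w k = 10 * linearDenCoeff w c₀ (-(c₁ * uc / 3)) k := by
    intro k hk
    have := coeff_eq_zero_of_isBigO hxlim hx0 6 P hPO hk
    rw [hP, Polynomial.finsetSum_coeff] at this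
    simp only [Polynomial.coeff_C_mul_X_pow, Finset.sum_ite_eq, Finset.mem_range,
      show k < 10 by lia, if_true] at this
    exact sub_eq_zero.1 this
  have h4 := hcoeff 4 (by norm_num)
  have h5 := hcoeff 5 (by norm_num)
  simp only [paramNumCoeff, linearDenCoeff] at h4 h5
  have hzero : 4 + 2 * w + 3 * w ^ 2 = 0 := by
    linear_combination -h4 + (w + 2) / 3 * h5
  have hw := coord_mem_boundedSector hu
  have hre := congrArg Complex.re hzero
  have h2 := re_sq_ge hw
  have hre1 : ((2 : ℂ) * w).re = 2 * w.re := by simp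
  have hre2 : ((3 : ℂ) * w ^ 2).re = 3 * (w ^ 2).re := by simp
  rw [Complex.add_re, Complex.add_re, hre1, hre2, Complex.zero_re] at hre
  norm_num at hre
  nlinarith [hw.1, sq_nonneg w.re]

theorem analyticAt_tsum_of_summable {a : ℕ → ℂ} {v y : ℂ}
    (h : Summable fun n => a n * v ^ n) (hy : ‖y‖ < ‖v‖) :
    AnalyticAt ℂ (fun y => ∑' n, a n * y ^ n) y := by
  set p := FormalMultilinearSeries.ofScalars ℂ a
  have hrad : (‖v‖₊ : ENNReal) ≤ p.radius := by
    refine p.le_radius_of_tendsto (l := 0) ?_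
    simpa [p, FormalMultilinearSeries.ofScalars_norm] using
      h.tendsto_atTop_zero.norm
  have hlt : (‖y‖₊ : ENNReal) < p.radius :=
    lt_of_lt_of_le (by exact_mod_cast hy) hrad
  have hball := p.hasFPowerSeriesOnBall (pos_of_gt hlt)
  have hsum : p.sum = fun y => ∑' n, a n * y ^ n := by
    funext y
    simp [p, FormalMultilinearSeries.sum, FormalMultilinearSeries.coeff_ofScalars, mul_comm]
  rw [← hsum]
  exact hball.analyticAt_of_mem (by simpa [enorm_eq_nnnorm] using hlt)

/-! ### Continuation to a slit disk -/

theorem finite_setOf_paramDen_eq_zero (w : ℂ) : {x : ℂ | paramDen w x = 0}.Finite := by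
  set p : Polynomial ℂ := Polynomial.X ^ 3 + (Polynomial.C (1 + w + w ^ 2) * Polynomial.X ^ 2
    + Polynomial.C (1 + w + w ^ 2) * Polynomial.X + Polynomial.C (w + w ^ 2 + w ^ 3)) with hp
  have hp0 : p ≠ 0 := by
    intro h
    have := congrArg (fun q : Polynomial ℂ => q.coeff 3) h
    simp only [hp, Polynomial.coeff_add, Polynomial.coeff_C_mul, Polynomial.coeff_X_pow,
      Polynomial.coeff_X, Polynomial.coeff_C, Polynomial.coeff_zero] at this
    norm_num at this
  refine (Polynomial.finite_setOfPred_isRoot hp0).subset fun x hx => ?_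
  rw [Set.mem_ofPred_eq, paramDen] at hx
  rw [Set.mem_ofPred_eq, Polynomial.IsRoot, hp]
  simp only [Polynomial.eval_add, Polynomial.eval_mul, Polynomial.eval_pow, Polynomial.eval_C,
    Polynomial.eval_X]
  linear_combination hx

theorem exists_margin (u : ℂ) : ∃ ε > 0, ∀ v : ℂ, 1 - v / uc ∈ branchDomain →
    uc < ‖v‖ → ‖v‖ < uc + ε → paramDen (coord u) (coord v) ≠ 0 := by
  have hfin : ((fun x => ‖uhat (1 - x)‖ - uc) '' {x | paramDen (coord u) x = 0}).Finite :=
    (finite_setOf_paramDen_eq_zero _).image _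
  have hev : ∀ᶠ ε in nhdsWithin (0 : ℝ) (Set.Ioi 0),
      ∀ y ∈ (fun x => ‖uhat (1 - x)‖ - uc) '' {x | paramDen (coord u) x = 0},
        0 < y → ε < y := by
    rw [Filter.eventually_all_finite hfin]
    intro y _
    by_cases hy : 0 < y
    · filter_upwards [nhdsWithin_le_nhds (eventually_lt_nhds hy)] with ε hε _ using hε
    · exact Filter.Eventually.of_forall fun _ h => absurd h hy
  obtain ⟨ε, hε, hpos⟩ := (hev.and self_mem_nhdsWithin).exists
  refine ⟨ε, hpos, fun v hmem hlt hltε h0 => ?_⟩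
  have := hε _ ⟨coord v, h0, rfl⟩
  simp only [uhat_one_sub_coord (Set.mem_insert_of_mem 0 hmem)] at this
  linarith [this (by linarith)]

theorem exists_analyticAt_Zext_slitDisk {u : ℂ} (hu : ‖u‖ ≤ uc) :
    ∃ ε : ℝ, 0 < ε ∧ ∀ w ∈ slitDisk uc ε, AnalyticAt ℂ (Zext u) w := by
  have hU := uc_pos
  obtain ⟨ε, hε, hne⟩ := exists_margin u
  have hdisk : ∀ w ∈ slitDisk uc (min ε uc),
      1 - w / uc ∈ branchDomain ∧ paramDen (coord u) (coord w) ≠ 0 := by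
    rintro w ⟨hball, hslit⟩
    rw [mem_ball_zero_iff] at hball
    have hslit' : w.im = 0 → w.re < uc := by
      intro him
      by_contra! hre
      refine hslit ⟨w.re, ⟨hre, (Complex.re_le_norm w).trans hball.le⟩, ?_⟩
      exact Complex.ext (by simp) (by simp [him])
    have hmem : 1 - w / uc ∈ branchDomain :=
      one_sub_div_mem_branchDomain (by linarith [min_le_right ε uc]) hslit'
    refine ⟨hmem, ?_⟩
    rcases le_or_gt ‖w‖ uc with h | h
    · refine paramDen_coord_ne_zero hu h fun hw => ?_
      rw [hw] at hslit'
      simp at hslit'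
    · exact hne w hmem h (by linarith [min_le_left ε uc])
  refine ⟨min ε uc, lt_min hε hU, fun w hw => ?_⟩
  rw [Complex.analyticAt_iff_eventually_differentiableAt]
  have hopen : IsOpen (slitDisk uc (min ε uc)) :=
    Metric.isOpen_ball.sdiff (isCompact_Icc.image Complex.continuous_ofReal).isClosed
  filter_upwards [hopen.mem_nhds hw] with y hy
  exact differentiableAt_Zext_right u (hdisk y hy).1 (hdisk y hy).2

/-- for each `|u| ≤ u_c`, the power series `Z_u(v) = Σ_q (Σ_p z_{p,q} u^p) v^q`
has radius of convergence exactly `u_c`, admits no analytic continuation to any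
neighborhood of `u_c`, and admits an analytic continuation to a slit disk at `u_c`. -/
theorem statement5
    (ρ : ℝ) (hρ : 0 < ρ)
    (z : ℕ → ℕ → ℝ) (hz_nonneg : ∀ p q, 0 ≤ z p q)
    -- `z p 0` are the Taylor coefficients of `Z₀ = Ẑ₀ ∘ û⁻¹` at `0`
    (hz0 : ∀ H : ℂ, ‖H‖ < ρ →
      HasSum (fun p : ℕ => (z p 0 : ℂ) * uhat H ^ p) (Z0hat H))
    -- `z p q` are the Taylor coefficients at `(0,0)` of the solution `Z(u,v)` of the
    -- algebraic equation, expressed through the parametrization `u = û(H)`, `v = û(K)`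
    (hZ : ∀ H K : ℂ, ‖H‖ < ρ → ‖K‖ < ρ → ∃ ZHK : ℂ,
      HasSum (fun pq : ℕ × ℕ => (z pq.1 pq.2 : ℂ) * uhat H ^ pq.1 * uhat K ^ pq.2) ZHK ∧
      ((nuc : ℂ) * uhat K * uhat H - uhat H ^ 2
          - ((nuc : ℂ) ^ 2 - 1) * (tc : ℂ) * uhat K * (Z0hat H + uhat H * Z1hat K))
          * (ZHK - Z0hat K)
        = uhat H ^ 2 * (Z0hat K - Z0hat H)
          + ((nuc : ℂ) ^ 2 - 1) * uhat H * uhat K * (uhat H ^ 2 - (tc : ℂ) * Z0hat H * Z1hat K))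
    :
    ∀ u : ℂ, ‖u‖ ≤ uc →
      (∀ v : ℂ, ‖v‖ < uc →
        Summable (fun q : ℕ => (∑' p : ℕ, (z p q : ℂ) * u ^ p) * v ^ q)) ∧
      (∀ v : ℂ, uc < ‖v‖ →
        ¬ Summable (fun q : ℕ => (∑' p : ℕ, (z p q : ℂ) * u ^ p) * v ^ q)) ∧
      (¬ ∃ (g : ℂ → ℂ) (ε : ℝ), 0 < ε ∧
          (∀ w ∈ Metric.ball ((uc : ℝ) : ℂ) ε, AnalyticAt ℂ g w) ∧
          ∀ v : ℂ, ‖v‖ < uc → v ∈ Metric.ball ((uc : ℝ) : ℂ) ε →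
            g v = ∑' q : ℕ, (∑' p : ℕ, (z p q : ℂ) * u ^ p) * v ^ q) ∧
      (∃ (g : ℂ → ℂ) (ε : ℝ), 0 < ε ∧
          (∀ w ∈ slitDisk uc ε, AnalyticAt ℂ g w) ∧
          ∀ v : ℂ, ‖v‖ < uc →
            g v = ∑' q : ℕ, (∑' p : ℕ, (z p q : ℂ) * u ^ p) * v ^ q) := by
  obtain ⟨δ, hδ, hδU, hloc⟩ := exists_localEquation hρ hZ
  intro u hu
  have hsum : ∀ v : ℂ, ‖v‖ < uc →
      HasSum (fun q : ℕ => (∑' p : ℕ, (z p q : ℂ) * u ^ p) * v ^ q) (Zext u v) :=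
    fun v hv => (hloc.hasSum hz_nonneg hδ hδU hu hv).sum_columns
  refine ⟨fun v hv => (hsum v hv).summable, fun v hv hsummable => ?_, ?_, ?_⟩
  · refine not_analyticAt_of_eq_Zext hu one_pos (fun y hy _ => (hsum y hy).tsum_eq)
      (analyticAt_tsum_of_summable hsummable ?_)
    rwa [Complex.norm_real, Real.norm_of_nonneg uc_pos.le]
  · rintro ⟨g, ε, hε, hg, heq⟩
    exact not_analyticAt_of_eq_Zext hu hε
      (fun y hy hball => (heq y hy hball).trans (hsum y hy).tsum_eq)
      (hg _ (Metric.mem_ball_self hε))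
  · obtain ⟨ε, hε, han⟩ := exists_analyticAt_Zext_slitDisk hu
    exact ⟨Zext u, ε, hε, han, fun v hv => (hsum v hv).tsum_eq.symm⟩
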